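/- Let K be a finite extension of Q_p with ring of integers o_K, and let T = G_m^N denote the open subscheme of P^N_K consisting of points with all homogeneous coordinates nonzero. Given finitely many points y₁, …, y_r ∈ P^N(K̄), there exists an element g ∈ PGL_{N+1}(o_K) such that g(y₁), …, g(y_r) ∈ T(K̄). -/

import Mathlib

/-!
Two transvections suffice, so `g` can even be taken in `SL_{N+1}(o_K)`. Fix an index `i₀`. Adding
to the `i₀`-th coordinate a general linear combination of the other coordinates makes it nonzero
at all the `yₐ`; adding general multiples of the `i₀`-th coordinate to the other ones then makes
those nonzero as well. General here means outside the zero locus of finitely many nonzero polynomials,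
and this complement has a point with coordinates in `o_K` because `o_K` is an infinite subset of
the field `K̄`.
-/

noncomputable section

variable (p : ℕ) [Fact p.Prime]

variable (K : Type) [Field K] [Algebra ℚ_[p] K] [FiniteDimensional ℚ_[p] K]

instance : Algebra ℤ_[p] K :=
  ((algebraMap ℚ_[p] K).comp (algebraMap ℤ_[p] ℚ_[p])).toAlgebra

/-- The ring of integers `o_K` of a finite extension `K` of `ℚ_p`. -/
abbrev ringOfIntegers : Subalgebra ℤ_[p] K := integralClosure ℤ_[p] K

/-- The canonical ring homomorphism from `o_K` into the algebraic closure `K̄`. -/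
def intToClosure : ringOfIntegers p K →+* AlgebraicClosure K :=
  (algebraMap K (AlgebraicClosure K)).comp (Subalgebra.val _).toRingHom

section

open Matrix

theorem infinite_range_ringHom_of_charZero {R F : Type*} [NonAssocSemiring R] [NonAssocSemiring F]
    [CharZero F] (φ : R →+* F) : (Set.range φ).Infinite :=
  (Set.infinite_range_of_injective (Nat.cast_injective (R := F))).mono <| by
    rintro _ ⟨m, rfl⟩
    exact ⟨m, map_natCast φ m⟩

variable {ι n R F : Type*} [Finite ι] [CommRing F]

theorem exists_mem_pi_forall_mvPolynomial_eval_ne_zero [IsDomain F] (s : n → Set F)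
    (hs : ∀ i, (s i).Infinite) (f : ι → MvPolynomial n F) (hf : ∀ a, f a ≠ 0) :
    ∃ z ∈ Set.pi Set.univ s, ∀ a, MvPolynomial.eval z (f a) ≠ 0 := by
  have := Fintype.ofFinite ι
  by_contra! h
  have hprod : ∏ a, f a = 0 := MvPolynomial.funext_set s hs fun z hz ↦ by
    obtain ⟨a, ha⟩ := h z hz
    rw [map_prod, map_zero]
    exact Finset.prod_eq_zero (Finset.mem_univ a) ha
  exact Finset.prod_ne_zero_iff.2 (fun a _ ↦ hf a) hprod

theorem exists_forall_add_dotProduct_ne_zero [IsDomain F] [Fintype n] {φ : R → F}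
    (hφ : (Set.range φ).Infinite) (c : ι → F) (d : ι → n → F) (hcd : ∀ a, c a = 0 → d a ≠ 0) :
    ∃ x : n → R, ∀ a, c a + (φ ∘ x) ⬝ᵥ d a ≠ 0 := by
  classical
  let f (a : ι) : MvPolynomial n F :=
    MvPolynomial.C (c a) + ∑ i, MvPolynomial.X i * MvPolynomial.C (d a i)
  have eval_f (a : ι) (z : n → F) : MvPolynomial.eval z (f a) = c a + z ⬝ᵥ d a := by
    simp [f, dotProduct]
  have hf (a : ι) : f a ≠ 0 := fun h ↦ by
    have hz (z : n → F) : c a + z ⬝ᵥ d a = 0 := by rw [← eval_f, h, map_zero]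
    have hc : c a = 0 := by simpa using hz 0
    exact hcd a hc <| funext fun i ↦ by simpa [hc] using hz (Pi.single i 1)
  obtain ⟨z, hz, hfz⟩ :=
    exists_mem_pi_forall_mvPolynomial_eval_ne_zero (fun _ ↦ Set.range φ) (fun _ ↦ hφ) f hf
  choose x hx using fun i ↦ hz i (Set.mem_univ i)
  obtain rfl : φ ∘ x = z := funext hx
  exact ⟨x, fun a ↦ eval_f a _ ▸ hfz a⟩

variable [CommRing R] [Fintype n] [DecidableEq n]

/-- The transvection `v ↦ v + (w ⬝ᵥ v) • u` attached to a vector `u` and a linear form `w` vanishing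
at `u`, as an element of the special linear group. -/
def vecTransvection (u w : n → R) (h : w ⬝ᵥ u = 0) : Matrix.SpecialLinearGroup n R :=
  ⟨1 + vecMulVec u w, by
    rw [vecMulVec_eq Unit, det_one_add_replicateCol_mul_replicateRow, h, add_zero]⟩

theorem map_vecTransvection_mulVec (φ : R →+* F) (u w : n → R) (h : w ⬝ᵥ u = 0) (v : n → F) :
    (vecTransvection u w h : Matrix n n R).map φ *ᵥ v = v + ((φ ∘ w) ⬝ᵥ v) • (φ ∘ u) := by
  have hmap : (vecTransvection u w h : Matrix n n R).map φ = 1 + vecMulVec (φ ∘ u) (φ ∘ w) := by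
    ext i j
    simp [vecTransvection, vecMulVec_apply, one_apply, apply_ite φ]
  rw [hmap, add_mulVec, one_mulVec, vecMulVec_mulVec, op_smul_eq_smul]

variable [IsDomain F] {φ : R →+* F}

theorem exists_specialLinearGroup_mulVec_apply_ne_zero_of_ne_zero (hφ : (Set.range φ).Infinite)
    (v : ι → n → F) (hv : ∀ a, v a ≠ 0) (i₀ : n) :
    ∃ g : Matrix.SpecialLinearGroup n R, ∀ a, ((g : Matrix n n R).map φ *ᵥ v a) i₀ ≠ 0 := by
  obtain ⟨x, hx⟩ := exists_forall_add_dotProduct_ne_zero hφ (fun a ↦ v a i₀)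
    (fun a ↦ Function.update (v a) i₀ 0) fun a h₀ h ↦
      hv a <| by rwa [← h₀, Function.update_eq_self] at h
  let w := Function.update x i₀ 0
  have hw (a : ι) : (φ ∘ w) ⬝ᵥ v a = (φ ∘ x) ⬝ᵥ Function.update (v a) i₀ 0 :=
    Finset.sum_congr rfl fun i _ ↦ by
      obtain rfl | hi := eq_or_ne i i₀ <;> simp [w, *]
  refine ⟨vecTransvection (Pi.single i₀ 1) w (by simp [w]), fun a ↦ ?_⟩
  rw [map_vecTransvection_mulVec, hw]
  simpa using hx a

theorem exists_specialLinearGroup_forall_mulVec_apply_ne_zero_of_apply_ne_zero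
    (hφ : (Set.range φ).Infinite) (v : ι → n → F) (i₀ : n) (hv : ∀ a, v a i₀ ≠ 0) :
    ∃ g : Matrix.SpecialLinearGroup n R, ∀ a i, ((g : Matrix n n R).map φ *ᵥ v a) i ≠ 0 := by
  obtain ⟨x, hx⟩ := exists_forall_add_dotProduct_ne_zero hφ (fun q : ι × n ↦ v q.1 q.2)
    (fun q ↦ Pi.single q.2 (v q.1 i₀)) fun q _ h ↦ hv q.1 (Pi.single_eq_zero_iff.1 h)
  refine ⟨vecTransvection (Function.update x i₀ 0) (Pi.single i₀ 1) (by simp), fun a i ↦ ?_⟩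
  have hsingle : (φ ∘ Pi.single i₀ 1) ⬝ᵥ v a = v a i₀ := by
    simp [dotProduct, Pi.single_apply, apply_ite φ]
  rw [map_vecTransvection_mulVec, hsingle]
  obtain rfl | hi := eq_or_ne i i₀
  · simpa using hv a
  · simpa [hi, mul_comm] using hx (a, i)

theorem statement19_general (hφ : (Set.range φ).Infinite) (v : ι → n → F) (hv : ∀ a, v a ≠ 0) :
    ∃ g : Matrix.SpecialLinearGroup n R, ∀ a i, ((g : Matrix n n R).map φ *ᵥ v a) i ≠ 0 := by
  obtain _ | ⟨⟨i₀⟩⟩ := isEmpty_or_nonempty n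
  · exact ⟨1, fun _ ↦ isEmptyElim⟩
  obtain ⟨g, hg⟩ := exists_specialLinearGroup_mulVec_apply_ne_zero_of_ne_zero hφ v hv i₀
  obtain ⟨h, hh⟩ :=
    exists_specialLinearGroup_forall_mulVec_apply_ne_zero_of_apply_ne_zero hφ _ i₀ hg
  refine ⟨h * g, fun a i ↦ ?_⟩
  rw [Matrix.SpecialLinearGroup.coe_mul, Matrix.map_mul, ← mulVec_mulVec]
  exact hh a i

end

/-- STATEMENT 19: Let `K` be a finite extension of `ℚ_p` with ring of
integers `o_K`, and let `T = 𝔾_mᴺ ⊆ ℙᴺ_K` be the locus where all homogeneous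
coordinates are nonzero.  Given finitely many points `y₁, …, y_r ∈ ℙᴺ(K̄)`,
there is an element `g` of `PGL_{N+1}(o_K)` (here represented by a lift in
`GL_{N+1}(o_K)`, acting on `ℙᴺ(K̄) = ℙ(K̄^{N+1})` through the coefficient
embedding `o_K → K̄`) such that `g(y₁), …, g(y_r)` all lie in `T(K̄)`, i.e.
every homogeneous coordinate of every `g(yₐ)` is nonzero. -/
theorem statement19 (N r : ℕ)
    (y : Fin r → Projectivization (AlgebraicClosure K)
      (Fin (N + 1) → AlgebraicClosure K)) :
    ∃ g : GL (Fin (N + 1)) (ringOfIntegers p K),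
      ∀ (α : Fin r) (i : Fin (N + 1)),
        Matrix.mulVec ((g : Matrix (Fin (N + 1)) (Fin (N + 1)) (ringOfIntegers p K)).map
          (intToClosure p K)) (y α).rep i ≠ 0 := by
  have : CharZero K := charZero_of_injective_algebraMap (algebraMap ℚ_[p] K).injective
  obtain ⟨g, hg⟩ := statement19_general
    (infinite_range_ringHom_of_charZero (intToClosure p K)) _ fun α ↦ (y α).rep_nonzero
  exact ⟨g, hg⟩
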